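/- Let t be an odd positive integer and let M be a matroid with an odd t-cyclic ordering e_1, e_2, …, e_n. Then for every index i ∈ {1,…,n} and every j with 1 ≤ j ≤ n/2, the set X = {e_{i+1}, e_{i+2}, …, e_{i+j}} satisfies λ(X) = j if j < t−1, and λ(X) = t−1 if j ≥ t−1. -/

import Mathlib

open Set

namespace CyclicArr

variable {α : Type*}

/-- `C` is a circuit of the matroid `M`: a minimal dependent set. -/
def Cct (M : Matroid α) (C : Set α) : Prop := Minimal M.Dep C

/-- The set of `len` consecutive elements `{e_i, e_{i+1}, …, e_{i+len-1}}`
in a cyclic ordering `e`, subscripts mod `n`. -/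
def seg {n : ℕ} (e : ZMod n → α) (i : ℤ) (len : ℕ) : Set α :=
  (fun k : ℕ => e ((i + k : ℤ) : ZMod n)) '' Set.Iio len

/-- `e` is a cyclic ordering of (the ground set of) `M`. -/
def CyclicOrd {n : ℕ} (M : Matroid α) (e : ZMod n → α) : Prop :=
  Function.Injective e ∧ Set.range e = M.E

/-- `e` is a cyclic `(t-1, t)`-ordering of `M`: every `t-1` consecutive elements
are contained in a `t`-element circuit and a `t`-element cocircuit. -/
def CyclicPropOrd {n : ℕ} (M : Matroid α) (t : ℕ) (e : ZMod n → α) : Prop :=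
  CyclicOrd M e ∧
  ∀ i : ℤ, (∃ C, Cct M C ∧ C.ncard = t ∧ seg e i (t-1) ⊆ C) ∧
           (∃ C, Cct M✶ C ∧ C.ncard = t ∧ seg e i (t-1) ⊆ C)

/-- `M` has the cyclic `(t-1, t)`-property: it admits a cyclic `(t-1, t)`-ordering. -/
def HasCycProp (M : Matroid α) (t : ℕ) : Prop :=
  ∃ (n : ℕ) (e : ZMod n → α), CyclicPropOrd M t e

/-- `e` is an odd `t`-cyclic ordering of `M` (with `n ≥ t+1`): for all odd `i ∈ {1,…,n}`,
`{e_i, …, e_{i+t-1}}` is a `t`-element circuit and `{e_{i+1}, …, e_{i+t}}` is a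
`t`-element cocircuit. -/
def OddTCycOrd {n : ℕ} (M : Matroid α) (t : ℕ) (e : ZMod n → α) : Prop :=
  CyclicOrd M e ∧ t + 1 ≤ n ∧
  ∀ i : ℕ, Odd i → 1 ≤ i → i ≤ n →
    (Cct M (seg e (i : ℤ) t) ∧ (seg e (i : ℤ) t).ncard = t) ∧
    (Cct M✶ (seg e ((i : ℤ) + 1) t) ∧ (seg e ((i : ℤ) + 1) t).ncard = t)

/-- `e` is an even `t`-cyclic ordering of `M` (with `n ≥ t+1`): for all odd `i ∈ {1,…,n}`,
`{e_i, …, e_{i+t-1}}` is both a `t`-element circuit and a `t`-element cocircuit. -/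
def EvenTCycOrd {n : ℕ} (M : Matroid α) (t : ℕ) (e : ZMod n → α) : Prop :=
  CyclicOrd M e ∧ t + 1 ≤ n ∧
  ∀ i : ℕ, Odd i → 1 ≤ i → i ≤ n →
    Cct M (seg e (i : ℤ) t) ∧ Cct M✶ (seg e (i : ℤ) t) ∧ (seg e (i : ℤ) t).ncard = t

/-- `M` is `t`-cyclic: it admits an odd or even `t`-cyclic ordering. -/
def TCyclic (M : Matroid α) (t : ℕ) : Prop :=
  ∃ (n : ℕ) (e : ZMod n → α), OddTCycOrd M t e ∨ EvenTCycOrd M t e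

/-- The rank of a set `X` in a matroid `M`: the maximum cardinality of an
independent subset of `X` (for a finite matroid). -/
noncomputable def rkf (M : Matroid α) (X : Set α) : ℕ :=
  sSup {k | ∃ I, M.Indep I ∧ I ⊆ X ∧ I.ncard = k}

/-- The connectivity function `λ(X) = r(X) + r*(X) - |X|`, valued in `ℤ`. -/
noncomputable def lam (M : Matroid α) (X : Set α) : ℤ :=
  (rkf M X : ℤ) + (rkf M✶ X : ℤ) - (X.ncard : ℤ)

/-- The local connectivity `⊓(X, Y) = r(X) + r(Y) - r(X ∪ Y)`, valued in `ℤ`. -/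
noncomputable def pic (M : Matroid α) (X Y : Set α) : ℤ :=
  (rkf M X : ℤ) + (rkf M Y : ℤ) - (rkf M (X ∪ Y) : ℤ)

/-- `X` is exactly `k`-separating: `λ(X) = k - 1`. -/
noncomputable def ExactSep (M : Matroid α) (k : ℕ) (X : Set α) : Prop :=
  lam M X = (k : ℤ) - 1

/-- `(P_1, …, P_m)` is a concatenation of the cyclic ordering `e`, where `P i` is the
block of `l i` consecutive elements starting at position `a i`, and the blocks occur in
cyclic order and partition the ground set. -/
def IsConcat {n m : ℕ} (e : ZMod n → α) (P : ZMod m → Set α) (a l : ZMod m → ℕ) : Prop :=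
  (∀ i, 1 ≤ l i) ∧
  (∀ i, ((a (i + 1) : ZMod n)) = ((a i + l i : ℕ) : ZMod n)) ∧
  (∀ i, P i = seg e (a i : ℤ) (l i)) ∧
  Set.univ.PairwiseDisjoint P ∧
  (⋃ i, P i) = Set.range e

/-- `(P_1, …, P_m)` is a `k`-flower of `M`: a partition of the ground set into nonempty
sets, each exactly `k`-separating, with consecutive unions exactly `k`-separating. -/
noncomputable def IsFlower (M : Matroid α) (k : ℕ) {m : ℕ} (P : ZMod m → Set α) : Prop :=
  2 ≤ m ∧
  Set.univ.PairwiseDisjoint P ∧ (⋃ i, P i) = M.E ∧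
  (∀ i, (P i).Nonempty) ∧
  (∀ i, ExactSep M k (P i)) ∧
  (3 ≤ m → ∀ i, ExactSep M k (P i ∪ P (i + 1)))

/-- `I ⊆ ZMod m` is a set of consecutive members in the cyclic order. -/
def CycInterval {m : ℕ} (I : Set (ZMod m)) : Prop :=
  ∃ (a : ZMod m) (len : ℕ), 0 < len ∧ I = (fun k : ℕ => a + (k : ZMod m)) '' Set.Iio len

/-- A `k`-daisy: a `k`-flower in which the union of a proper nonempty collection of
petals is exactly `k`-separating precisely when the petals are consecutive. -/
noncomputable def IsDaisy (M : Matroid α) (k : ℕ) {m : ℕ} (P : ZMod m → Set α) : Prop :=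
  IsFlower M k P ∧
  ∀ I : Set (ZMod m), I.Nonempty → I ≠ Set.univ →
    (ExactSep M k (⋃ i ∈ I, P i) ↔ CycInterval I)

/-- A `k`-anemone: a `k`-flower in which the union of every proper nonempty collection
of petals is exactly `k`-separating. -/
noncomputable def IsAnemone (M : Matroid α) (k : ℕ) {m : ℕ} (P : ZMod m → Set α) : Prop :=
  IsFlower M k P ∧
  ∀ I : Set (ZMod m), I.Nonempty → I ≠ Set.univ → ExactSep M k (⋃ i ∈ I, P i)


lemma rkf_cast (M : Matroid α) {X : Set α} (hX : X.Finite) : (rkf M X : ℕ∞) = M.eRk X := by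
  obtain ⟨I, hI⟩ := M.exists_isBasis' X
  have hIf : I.Finite := hX.subset hI.subset
  have h : IsGreatest {k | ∃ I, M.Indep I ∧ I ⊆ X ∧ I.ncard = k} I.ncard := by
    refine ⟨⟨I, hI.indep, hI.subset, rfl⟩, ?_⟩
    rintro k ⟨J, hJ, hJX, rfl⟩
    have h1 := hJ.encard_le_eRk_of_subset hJX
    rw [← hI.encard_eq_eRk, ← (hX.subset hJX).cast_ncard_eq, ← hIf.cast_ncard_eq] at h1
    exact_mod_cast h1
  rw [← hI.encard_eq_eRk, ← hIf.cast_ncard_eq, rkf, h.csSup_eq]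

lemma mem_seg {n : ℕ} (e : ZMod n → α) (i : ℤ) (len : ℕ) (x : α) :
    x ∈ seg e i len ↔ ∃ k : ℕ, k < len ∧ e ((i + k : ℤ) : ZMod n) = x := by
  simp [seg]

lemma e_eq {n : ℕ} {e : ZMod n → α} (he : Function.Injective e) (a b : ℤ) :
    e (a : ZMod n) = e (b : ZMod n) ↔ (n : ℤ) ∣ b - a := by
  rw [he.eq_iff, ZMod.intCast_eq_intCast_iff_dvd_sub]

lemma seg_finite {n : ℕ} (e : ZMod n → α) (i : ℤ) (len : ℕ) : (seg e i len).Finite :=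
  (Set.finite_Iio len).image _

lemma small_dvd {n : ℕ} {d : ℤ} (h : (n : ℤ) ∣ d) (h1 : d < n) (h2 : -(n : ℤ) < d) : d = 0 :=
  Int.eq_zero_of_abs_lt_dvd h (abs_lt.2 ⟨h2, h1⟩)

lemma seg_ncard {n : ℕ} {e : ZMod n → α} (he : Function.Injective e) (i : ℤ) {len : ℕ}
    (h : len ≤ n) : (seg e i len).ncard = len := by
  rw [seg, Set.ncard_image_of_injOn]
  · simp [Set.ncard_eq_toFinset_card']
  · intro a ha b hb hab
    simp only [Set.mem_Iio] at ha hb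
    have := (e_eq he _ _).1 hab
    have := small_dvd this (by omega) (by omega)
    omega

lemma seg_succ {n : ℕ} (e : ZMod n → α) (i : ℤ) (len : ℕ) :
    seg e i (len + 1) = insert (e ((i + len : ℤ) : ZMod n)) (seg e i len) := by
  ext x
  simp only [Set.mem_insert_iff, mem_seg]
  constructor
  · rintro ⟨k, hk, rfl⟩
    rcases Nat.lt_succ_iff_lt_or_eq.1 hk with h | rfl
    · exact .inr ⟨k, h, rfl⟩
    · exact .inl rfl
  · rintro (rfl | ⟨k, hk, rfl⟩)
    · exact ⟨len, by omega, rfl⟩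
    · exact ⟨k, by omega, rfl⟩

lemma seg_sub {n : ℕ} (e : ZMod n → α) (i i' : ℤ) (l l' : ℕ) (h : i ≤ i')
    (h' : i' + l' ≤ i + l) : seg e i' l' ⊆ seg e i l := by
  intro x
  simp only [mem_seg]
  rintro ⟨k, hk, rfl⟩
  refine ⟨(i' - i).toNat + k, by omega, ?_⟩
  congr 2
  omega

lemma seg_congr {n : ℕ} (e : ZMod n → α) (i i' : ℤ) (l : ℕ) (h : (n : ℤ) ∣ i' - i) :
    seg e i l = seg e i' l := by
  have := (ZMod.intCast_eq_intCast_iff_dvd_sub i i' n).2 h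
  ext x
  simp only [mem_seg, Int.cast_add, this]

lemma seg_compl {n : ℕ} {e : ZMod n → α} (he : Function.Injective e) (i : ℤ) {l : ℕ}
    (h : l ≤ n) (hn : 0 < n) : Set.range e \ seg e i l = seg e (i + l) (n - l) := by
  ext x
  simp only [mem_seg, Set.mem_sdiff, Set.mem_range]
  constructor
  · rintro ⟨⟨y, rfl⟩, hy⟩
    obtain ⟨z, rfl⟩ := ZMod.intCast_surjective y
    have h0 := Int.emod_nonneg (z - i) (b := n) (by omega)
    have h1 := Int.emod_lt_of_pos (z - i) (b := n) (by omega)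
    have hz : ∀ w : ℤ, w = i + (z - i) % n → e ((w : ℤ) : ZMod n) = e (z : ZMod n) := by
      rintro w rfl
      rw [e_eq he]
      refine ⟨(z - i) / n, ?_⟩
      have := Int.emod_add_mul_ediv (z - i) n
      linarith
    by_cases hlt : (z - i) % n < l
    · exact absurd ⟨((z - i) % n).toNat, by omega, hz _ (by omega)⟩ hy
    · exact ⟨((z - i) % n).toNat - l, by omega, hz _ (by omega)⟩
  · rintro ⟨k, hk, rfl⟩
    refine ⟨⟨_, rfl⟩, ?_⟩
    rintro ⟨m, hm, hm'⟩
    have := small_dvd ((e_eq he _ _).1 hm') (by omega) (by omega)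
    omega

lemma lam_symm (M : Matroid α) (hE : M.E.Finite) {X : Set α} (hX : X ⊆ M.E) :
    lam M (M.E \ X) = lam M X := by
  have hXf := hE.subset hX
  have hYf : (M.E \ X).Finite := hE.subset Set.sdiff_subset
  have h1 := M.eRk_dual_add_eRank X hX
  have h2 := M.eRk_dual_add_eRank (M.E \ X) Set.sdiff_subset
  rw [Set.sdiff_sdiff_cancel_left hX] at h2
  rw [← M.eRk_ground, ← rkf_cast _ hXf, ← rkf_cast _ hE, ← rkf_cast _ hYf,
    ← hXf.cast_ncard_eq] at h1
  rw [← M.eRk_ground, ← rkf_cast _ hXf, ← rkf_cast _ hE, ← rkf_cast _ hYf,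
    ← hYf.cast_ncard_eq] at h2
  norm_cast at h1 h2
  unfold lam
  omega

lemma rkf_insert_le (M : Matroid α) {X : Set α} (hX : X.Finite) (x : α) :
    rkf M (insert x X) ≤ rkf M X + 1 := by
  have := M.eRk_insert_le_add_one x X
  rw [← rkf_cast _ hX, ← rkf_cast _ (hX.insert x)] at this
  exact_mod_cast this

lemma rkf_insert_eq (M : Matroid α) {X C : Set α} (hX : X.Finite) {x : α} (hx : x ∉ X)
    (hC : Cct M C) (hxC : x ∈ C) (hCX : C ⊆ insert x X) :
    rkf M (insert x X) = rkf M X := by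
  have hcl : x ∈ M.closure X := (Matroid.mem_closure_iff_exists_isCircuit hx).2 ⟨C, hCX, hC, hxC⟩
  have h : M.eRk (insert x X) = M.eRk X := by
    apply le_antisymm _ (M.eRk_mono (Set.subset_insert _ _))
    rw [← M.eRk_closure_eq (insert x X), Matroid.closure_insert_eq_of_mem_closure hcl,
      M.eRk_closure_eq]
  rw [← rkf_cast _ hX, ← rkf_cast _ (hX.insert x)] at h
  exact_mod_cast h

lemma rkf_indep {M : Matroid α} {X : Set α} (hX : X.Finite) (h : M.Indep X) :
    rkf M X = X.ncard := by
  have h := h.eRk_eq_encard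
  rw [← rkf_cast _ hX, ← hX.cast_ncard_eq] at h
  exact_mod_cast h

lemma cct_sub {M : Matroid α} {X C : Set α} (hC : Cct M C) (hX : X ⊆ C)
    (hc : X.ncard < C.ncard) : M.Indep X :=
  Matroid.IsCircuit.ssubset_indep hC (hX.ssubset_of_ne (by rintro rfl; omega))

lemma two_t_le {M : Matroid α} {t n : ℕ} (htodd : Odd t)
    {e : ZMod n → α} (he : OddTCycOrd M t e) : 2 * t ≤ n + 2 := by
  obtain ⟨⟨hinj, hE⟩, hn, hc⟩ := he
  have ht := htodd.pos
  have : NeZero n := ⟨by omega⟩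
  have hEf : M.E.Finite := hE ▸ Set.finite_range e
  obtain ⟨⟨h1, -⟩, ⟨h2, -⟩⟩ := hc 1 odd_one le_rfl (by omega)
  have i1 := cct_sub h1 (seg_sub e _ (1 : ℕ) t (t - 1) le_rfl (by omega))
    (by rw [seg_ncard hinj _ (by omega), seg_ncard hinj _ (by omega)]; omega)
  have i2 := cct_sub h2 (seg_sub e _ ((1 : ℕ) + 1) t (t - 1) le_rfl (by omega))
    (by rw [seg_ncard hinj _ (by omega), seg_ncard hinj _ (by omega)]; omega)
  have i1 := i1.encard_le_eRank
  have i2 := i2.encard_le_eRank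
  have h3 := M.eRank_add_eRank_dual
  have hcard : M.E.ncard = n := by
    rw [← hE, ← Set.image_univ, Set.ncard_image_of_injective _ hinj, Set.ncard_univ,
      Nat.card_zmod]
  have hd : M✶.eRank = rkf M✶ M.E := by rw [rkf_cast _ hEf, ← M.dual_ground, M✶.eRk_ground]
  rw [← M.eRk_ground, ← rkf_cast _ hEf, ← (seg_finite e _ _).cast_ncard_eq,
    seg_ncard hinj _ (by omega)] at i1
  rw [hd, ← (seg_finite e _ _).cast_ncard_eq, seg_ncard hinj _ (by omega)] at i2
  rw [hd, ← M.eRk_ground, ← rkf_cast _ hEf, ← hEf.cast_ncard_eq, hcard] at h3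
  norm_cast at i1 i2 h3
  omega

lemma n_even {M : Matroid α} {t n : ℕ} (htodd : Odd t)
    {e : ZMod n → α} (he : OddTCycOrd M t e) : Even n := by
  by_contra hne
  rw [Nat.not_even_iff_odd] at hne
  have h2 := two_t_le htodd he
  obtain ⟨⟨hinj, hE⟩, hn, hc⟩ := he
  have ht := htodd.pos
  have key : ∀ C K : Set α, Cct M C → Cct M✶ K → ∀ x, C ∩ K = {x} → False := by
    intro C K hC hK x hx
    have := Matroid.IsCircuit.inter_isCocircuit_ne_singleton (M := M) (e := x) hC hK
    exact this hx
  obtain ⟨s, hs⟩ := htodd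
  obtain ⟨m, hm⟩ := hne
  rcases Nat.eq_zero_or_pos s with h0 | hs0
  · have ht1 : t = 1 := by omega
    have a := (hc 1 odd_one le_rfl (by omega)).1.1
    have b := (hc n ⟨m, hm⟩ (by omega) le_rfl).2.1
    refine key _ _ a b (e ((1 : ℤ) : ZMod n)) ?_
    subst ht1
    simp [seg]
  · have a := (hc n ⟨m, hm⟩ (by omega) le_rfl).1.1
    have b := (hc (t - 2) ⟨s - 1, by omega⟩ (by omega) (by omega)).2.1
    refine key _ _ a b (e (((t - 1 : ℕ) : ℤ) : ZMod n)) ?_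
    ext x
    simp only [Set.mem_inter_iff, mem_seg, Set.mem_singleton_iff]
    constructor
    · rintro ⟨⟨k, hk, rfl⟩, ⟨l, hl, hkl⟩⟩
      have h := (e_eq hinj _ _).1 hkl
      have h' : (n : ℤ) ∣ (k : ℤ) - (((t - 2 : ℕ) : ℤ) + 1 + l) := by
        obtain ⟨c, hcc⟩ := h
        exact ⟨c - 1, by rw [mul_sub]; linarith⟩
      have := small_dvd h' (by omega) (by omega)
      rw [e_eq hinj]
      exact ⟨-1, by omega⟩
    · rintro rfl
      refine ⟨⟨t - 1, by omega, ?_⟩, ⟨0, by omega, ?_⟩⟩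
      · rw [e_eq hinj]; exact ⟨-1, by omega⟩
      · rw [e_eq hinj]; exact ⟨0, by omega⟩

lemma cct_int {M : Matroid α} {t n : ℕ} (htodd : Odd t)
    {e : ZMod n → α} (he : OddTCycOrd M t e) (i : ℤ) (hi : Odd i) :
    Cct M (seg e i t) ∧ Cct M✶ (seg e (i + 1) t) := by
  obtain ⟨m, hm⟩ := n_even htodd he
  obtain ⟨⟨hinj, hE⟩, hn, hc⟩ := he
  have h0 := Int.emod_nonneg i (b := n) (by omega)
  have h1 := Int.emod_lt_of_pos i (b := n) (by omega)
  have h2 := Int.emod_add_mul_ediv i n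
  have hodd : Odd (i % n) := by
    rw [← h2, Int.odd_add] at hi
    exact hi.2 ((Int.even_mul).2 (.inl ⟨m, by exact_mod_cast hm⟩))
  have hpos : i % n ≠ 0 := by rintro h; rw [h] at hodd; exact absurd hodd (by decide)
  have hcast : (((i % n).toNat : ℕ) : ℤ) = i % n := by omega
  have := hc (i % n).toNat (by rw [← Int.odd_coe_nat, hcast]; exact hodd) (by omega) (by omega)
  rw [hcast] at this
  rw [seg_congr e i (i % n) t ⟨-(i / n), by linarith⟩,
    seg_congr e (i + 1) (i % n + 1) t ⟨-(i / n), by linarith⟩]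
  exact ⟨this.1.1, this.2.1⟩

lemma lam_small {M : Matroid α} {t n : ℕ} (htodd : Odd t)
    {e : ZMod n → α} (he : OddTCycOrd M t e) (i : ℤ) (j : ℕ) (hj : j ≤ t - 1) :
    lam M (seg e i j) = j := by
  have hc := cct_int htodd he
  obtain ⟨⟨hinj, hE⟩, hn, -⟩ := he
  have ht := htodd.pos
  have hsub : ∀ (N : Matroid α) (k : ℤ), Cct N (seg e k t) → k ≤ i → i ≤ k + 1 →
      N.Indep (seg e i j) := fun N k hk h1 h2 =>
    cct_sub hk (seg_sub e _ _ _ _ h1 (by omega))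
      (by rw [seg_ncard hinj _ (by omega), seg_ncard hinj _ (by omega)]; omega)
  have hI : M.Indep (seg e i j) ∧ M✶.Indep (seg e i j) := by
    rcases Int.even_or_odd i with h | h
    · exact ⟨hsub M (i - 1) (hc _ (h.sub_odd odd_one)).1 (by omega) (by omega),
        hsub _ (i - 1 + 1) (hc _ (h.sub_odd odd_one)).2 (by omega) (by omega)⟩
    · refine ⟨hsub M i (hc _ h).1 (by omega) (by omega),
        hsub _ (i - 2 + 1) (hc _ (h.sub_even even_two)).2 (by omega) (by omega)⟩
  rw [lam, rkf_indep (seg_finite _ _ _) hI.1, rkf_indep (seg_finite _ _ _) hI.2,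
    seg_ncard hinj _ (by omega)]
  ring

lemma lam_succ_le {M : Matroid α} {t n : ℕ} (htodd : Odd t)
    {e : ZMod n → α} (he : OddTCycOrd M t e) (i : ℤ) (j : ℕ) (hj : t - 1 ≤ j) (hjn : j + 1 ≤ n) :
    lam M (seg e i (j + 1)) ≤ lam M (seg e i j) := by
  have hc := cct_int htodd he
  obtain ⟨⟨hinj, hE⟩, hn, -⟩ := he
  have ht := htodd.pos
  have hx : e ((i + j : ℤ) : ZMod n) ∉ seg e i j := by
    rw [mem_seg]
    rintro ⟨k, hk, hkk⟩
    have := small_dvd ((e_eq hinj _ _).1 hkk) (by omega) (by omega)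
    omega
  have hXf := seg_finite e i j
  have hcard1 : (seg e i (j + 1)).ncard = j + 1 := seg_ncard hinj i hjn
  have hcard2 : (seg e i j).ncard = j := seg_ncard hinj i (by omega)
  have hk : ∀ N : Matroid α, Cct N (seg e (i + j + 1 - t) t) →
      rkf N (seg e i (j + 1)) = rkf N (seg e i j) := by
    intro N hN
    rw [seg_succ]
    refine rkf_insert_eq N hXf hx hN ?_ ?_
    · rw [mem_seg]
      refine ⟨t - 1, by omega, ?_⟩
      congr 2; omega
    · rw [← seg_succ]
      exact seg_sub e _ _ _ _ (by omega) (by omega)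
  have h1 := rkf_insert_le M hXf (e ((i + j : ℤ) : ZMod n))
  have h2 := rkf_insert_le M✶ hXf (e ((i + j : ℤ) : ZMod n))
  rw [← seg_succ] at h1 h2
  unfold lam
  rcases Int.even_or_odd (i + j + 1 - t) with h | h
  · have := hk M✶ (by simpa using (hc _ (h.sub_odd odd_one)).2)
    omega
  · have := hk M (hc _ h).1
    omega

lemma lam_anti {M : Matroid α} {t n : ℕ} (htodd : Odd t)
    {e : ZMod n → α} (he : OddTCycOrd M t e) (i : ℤ) (j : ℕ) (hj : t - 1 ≤ j) (d : ℕ)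
    (hjn : j + d ≤ n) : lam M (seg e i (j + d)) ≤ lam M (seg e i j) := by
  induction d with
  | zero => simp
  | succ d ih =>
    exact (lam_succ_le htodd he i (j + d) (by omega) (by omega)).trans (ih (by omega))

/-- Let `t` be an odd positive integer and `e` an odd `t`-cyclic
ordering of `M`. For every `i ∈ {1,…,n}` and `1 ≤ j ≤ n/2`, the set
`X = {e_{i+1},…,e_{i+j}}` satisfies `λ(X) = j` if `j < t-1` and `λ(X) = t-1` otherwise. -/
theorem statement_11 (M : Matroid α) (t n : ℕ) (ht : 1 ≤ t) (htodd : Odd t)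
    (e : ZMod n → α) (he : OddTCycOrd M t e) :
    ∀ i : ℕ, 1 ≤ i → i ≤ n → ∀ j : ℕ, 1 ≤ j → 2 * j ≤ n →
      (j < t - 1 → lam M (seg e ((i : ℤ) + 1) j) = (j : ℤ)) ∧
      (t - 1 ≤ j → lam M (seg e ((i : ℤ) + 1) j) = (t : ℤ) - 1) := by
  intro i _ _ j _ hjn
  refine ⟨fun h => lam_small htodd he _ j h.le, fun h => ?_⟩
  have h2 := two_t_le htodd he
  obtain ⟨⟨hinj, hE⟩, hn, -⟩ := id he
  have : NeZero n := ⟨by omega⟩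
  have hEf : M.E.Finite := hE ▸ Set.finite_range e
  apply le_antisymm
  · obtain ⟨d, rfl⟩ := Nat.exists_eq_add_of_le h
    have := lam_anti htodd he ((i : ℤ) + 1) (t - 1) le_rfl d (by omega)
    rw [lam_small htodd he _ (t - 1) le_rfl] at this
    omega
  · obtain ⟨d, hd⟩ := Nat.exists_eq_add_of_le (show j ≤ n - (t - 1) by omega)
    have := lam_anti htodd he ((i : ℤ) + 1) j h d (by omega)
    rw [← hd, ← lam_symm M hEf (by rw [← hE]; rintro _ ⟨k, -, rfl⟩; exact ⟨_, rfl⟩), ← hE,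
      seg_compl hinj _ (by omega) (by omega), lam_small htodd he _ _ (by omega)] at this
    omega

end CyclicArr
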